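/- Let R be a commutative Noetherian ring and let 0 → L →^φ F → N → 0 be a short exact sequence of finitely generated R-modules with F free. If Tor_1^R(L, N) = 0, then the map φ ⊗ φ : L ⊗_R L → F ⊗_R F is injective. -/

import Mathlib

/-!
The map `φ ⊗ φ` factors as `L ⊗ L → L ⊗ F → F ⊗ F`. The second map is injective because `F` is
flat, and the kernel of the first is `Tor₁(L, N)` because `F` is projective.

Mathlib computes `Tor₁(L, N)` from a projective resolution `P` of `N`, whose degree-zero term need
not be `F`. If `Tor₁(L, N) = 0`, then `L ⊗ P₂ → L ⊗ P₁ → L ⊗ P₀` is exact, so `L ⊗ K → L ⊗ P₀` is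
injective for `K = ker (P₀ → N)` (`lTensor_ker_subtype_injective`). A form of Schanuel's lemma
(`lTensor_injective_of_projective`) transfers this injectivity to any other presentation of `N` by
a projective module, in particular to `L → F → N`.
-/

open CategoryTheory Limits TensorProduct

universe u

/-- If `P₁ → P₀ → N` is exact and `P₂ → P₁ → P₀` is a complex that becomes exact after tensoring
with `M`, then `M ⊗ ker (P₀ → N) → M ⊗ P₀` is injective: an element of the kernel lifts to
`M ⊗ P₁`, the lift comes from `M ⊗ P₂`, and the composite `P₂ → ker (P₀ → N)` is zero. -/
lemma lTensor_ker_subtype_injective {R M P₂ P₁ P₀ N : Type*} [CommRing R]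
    [AddCommGroup M] [Module R M] [AddCommGroup P₂] [Module R P₂] [AddCommGroup P₁] [Module R P₁]
    [AddCommGroup P₀] [Module R P₀] [AddCommGroup N] [Module R N]
    (d₂ : P₂ →ₗ[R] P₁) (d₁ : P₁ →ₗ[R] P₀) (ε : P₀ →ₗ[R] N)
    (hd : d₁ ∘ₗ d₂ = 0) (hε : Function.Exact d₁ ε)
    (hM : Function.Exact (d₂.lTensor M) (d₁.lTensor M)) :
    Function.Injective ((LinearMap.ker ε).subtype.lTensor M) := by
  let c : P₁ →ₗ[R] LinearMap.ker ε := d₁.codRestrict _ fun y ↦ hε.apply_apply_eq_zero y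
  have hc : Function.Surjective c := by
    rintro ⟨y, hy⟩
    obtain ⟨z, hz⟩ := (hε y).1 hy
    exact ⟨z, Subtype.ext hz⟩
  have hcd : c ∘ₗ d₂ = 0 := by
    ext z
    exact LinearMap.congr_fun hd z
  have hsub : (LinearMap.ker ε).subtype ∘ₗ c = d₁ := rfl
  rw [injective_iff_map_eq_zero]
  intro x hx
  obtain ⟨y, rfl⟩ := LinearMap.lTensor_surjective M hc x
  rw [← LinearMap.lTensor_comp_apply, hsub] at hx
  obtain ⟨z, rfl⟩ := (hM y).1 hx
  rw [← LinearMap.lTensor_comp_apply, hcd, LinearMap.lTensor_zero, LinearMap.zero_apply]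

/-- A map `a : A → C` that vanishes in `N` factors through the kernel `B` of `p : C → N`. -/
lemma exists_comp_eq_of_exact {R A B C N : Type*} [CommRing R]
    [AddCommGroup A] [Module R A] [AddCommGroup B] [Module R B]
    [AddCommGroup C] [Module R C] [AddCommGroup N] [Module R N]
    (i : B →ₗ[R] C) (p : C →ₗ[R] N) (hi : Function.Injective i) (hip : Function.Exact i p)
    (a : A →ₗ[R] C) (ha : p ∘ₗ a = 0) :
    ∃ b : A →ₗ[R] B, i ∘ₗ b = a :=
  ⟨a.codRestrictOfInjective i hi fun x ↦ (hip (a x)).1 (LinearMap.congr_fun ha x),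
    LinearMap.codRestrictOfInjective_comp ..⟩

/-- For `0 → L → F → N → 0` exact with `F` projective, whether `M ⊗ L → M ⊗ F` is injective depends
only on `N`. Given a second such sequence `0 → K → P → N → 0`, lifts `f : F → P` and `g : P → F` of
`id_N` restrict to maps between `L` and `K`, and `g f - id_F` factors through some `h : F → L`. -/
lemma lTensor_injective_of_projective {R M K P L F N : Type*} [CommRing R]
    [AddCommGroup M] [Module R M] [AddCommGroup K] [Module R K] [AddCommGroup P] [Module R P]
    [AddCommGroup L] [Module R L] [AddCommGroup F] [Module R F] [AddCommGroup N] [Module R N]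
    [Module.Projective R P] [Module.Projective R F]
    (ι : K →ₗ[R] P) (ε : P →ₗ[R] N) (hι : Function.Injective ι) (hε : Function.Surjective ε)
    (hιε : Function.Exact ι ε)
    (φ : L →ₗ[R] F) (π : F →ₗ[R] N) (hφ : Function.Injective φ) (hπ : Function.Surjective π)
    (hφπ : Function.Exact φ π)
    (hM : Function.Injective (ι.lTensor M)) :
    Function.Injective (φ.lTensor M) := by
  obtain ⟨f, hf⟩ := Module.projective_lifting_property ε π hε
  obtain ⟨g, hg⟩ := Module.projective_lifting_property π ε hπ
  obtain ⟨f', hf'⟩ := exists_comp_eq_of_exact ι ε hι hιε (f ∘ₗ φ) (by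
    rw [← LinearMap.comp_assoc, hf, hφπ.linearMap_comp_eq_zero])
  obtain ⟨g', hg'⟩ := exists_comp_eq_of_exact φ π hφ hφπ (g ∘ₗ ι) (by
    rw [← LinearMap.comp_assoc, hg, hιε.linearMap_comp_eq_zero])
  obtain ⟨h, hh⟩ := exists_comp_eq_of_exact φ π hφ hφπ (g ∘ₗ f - LinearMap.id) (by
    rw [LinearMap.comp_sub, ← LinearMap.comp_assoc, hg, hf, LinearMap.comp_id, sub_self])
  have key : g' ∘ₗ f' - h ∘ₗ φ = LinearMap.id := by
    ext x
    apply hφ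
    have h₁ := LinearMap.congr_fun hf' x
    have h₂ := LinearMap.congr_fun hg' (f' x)
    have h₃ := LinearMap.congr_fun hh (φ x)
    simp only [LinearMap.comp_apply, LinearMap.sub_apply, LinearMap.id_apply] at h₁ h₂ h₃ ⊢
    rw [map_sub, h₂, h₁, h₃, sub_sub_cancel]
  rw [injective_iff_map_eq_zero]
  intro x hx
  have hfx : f'.lTensor M x = 0 := by
    apply hM
    rw [← LinearMap.lTensor_comp_apply, hf', LinearMap.lTensor_comp_apply, hx, map_zero, map_zero]
  calc x = (g' ∘ₗ f' - h ∘ₗ φ).lTensor M x := by rw [key, LinearMap.lTensor_id_apply]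
    _ = 0 := by
      rw [LinearMap.lTensor_sub, LinearMap.sub_apply, LinearMap.lTensor_comp_apply,
        LinearMap.lTensor_comp_apply, hfx, hx, map_zero, map_zero, sub_zero]

lemma exact_lTensor_of_isZero_tor {R : Type u} [CommRing R] {L N : Type u}
    [AddCommGroup L] [Module R L] [AddCommGroup N] [Module R N]
    (P : ProjectiveResolution (ModuleCat.of R N))
    (htor : IsZero (((Tor (ModuleCat.{u} R) 1).obj (ModuleCat.of R L)).obj (ModuleCat.of R N))) :
    Function.Exact ((P.complex.d 2 1).hom.lTensor L) ((P.complex.d 1 0).hom.lTensor L) := by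
  have h := htor.of_iso (P.isoLeftDerivedObj
    ((MonoidalCategory.tensoringLeft (ModuleCat.{u} R)).obj (ModuleCat.of R L)) 1).symm
  replace h := (HomologicalComplex.exactAt_iff_isZero_homology _ _).2 h
  rw [HomologicalComplex.exactAt_iff' _ 2 1 0 (by simp) (by simp)] at h
  exact (ShortComplex.ShortExact.moduleCat_exact_iff_function_exact _).1 h

theorem stmt_18 (R : Type u) [CommRing R] [IsNoetherianRing R]
    (L F N : Type u) [AddCommGroup L] [Module R L] [Module.Finite R L]
    [AddCommGroup F] [Module R F] [Module.Finite R F] [Module.Free R F]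
    [AddCommGroup N] [Module R N] [Module.Finite R N]
    (φ : L →ₗ[R] F) (π : F →ₗ[R] N)
    (hφ : Function.Injective φ) (hπ : Function.Surjective π)
    (hexact : LinearMap.range φ = LinearMap.ker π)
    (htor : IsZero (((Tor (ModuleCat.{u} R) 1).obj (ModuleCat.of R L)).obj (ModuleCat.of R N))) :
    Function.Injective (TensorProduct.map φ φ) := by
  let P := projectiveResolution (ModuleCat.of R N)
  let ε : P.complex.X 0 →ₗ[R] N := (P.π.f 0).hom
  have hε : Function.Surjective ε :=
    (ModuleCat.epi_iff_surjective (P.π.f 0)).1 inferInstance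
  have hε₁ : Function.Exact (P.complex.d 1 0).hom ε :=
    (ShortComplex.ShortExact.moduleCat_exact_iff_function_exact _).1 P.exact₀
  have hd : (P.complex.d 1 0).hom ∘ₗ (P.complex.d 2 1).hom = 0 := by
    rw [← ModuleCat.hom_comp, P.complex.d_comp_d, ModuleCat.hom_zero]
  have : Module.Projective R (P.complex.X 0) :=
    (IsProjective.iff_projective _).2 (P.projective 0)
  have hK := lTensor_ker_subtype_injective _ _ ε hd hε₁ (exact_lTensor_of_isZero_tor P htor)
  have hL : Function.Injective (φ.lTensor L) :=
    lTensor_injective_of_projective (LinearMap.ker ε).subtype ε Subtype.val_injective hε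
      (LinearMap.exact_subtype_ker_map ε) φ π hφ hπ (LinearMap.exact_iff.2 hexact.symm) hK
  rw [← LinearMap.rTensor_comp_lTensor, LinearMap.coe_comp]
  exact (Module.Flat.rTensor_preserves_injective_linearMap φ hφ).comp hL
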